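/- For every starting point x_0 ≥ 0 and every x ∈ C(x_0), the measure ρ satisfies Σ_{w ∈ C(x_0)} ρ({w}) q(w,{x}) = ρ({x}); that is, the restriction of ρ to the essential class C(x_0) is an invariant measure for the process of reflections on C(x_0). -/

import Mathlib

open MeasureTheory ProbabilityTheory Filter
open scoped ENNReal

/-- The essential class `C(x₀) = {kd ± x₀ : k ∈ ℤ} ∩ [0, N]`, where `N = sup supp μ`
(the condition `x ≤ N` being expressed as: `x` is below every upper bound of the
support of `μ`, which is vacuous when `N = ∞`). -/
def essClass (μ : MeasureTheory.Measure ℝ) (d : ℕ) (x₀ : ℝ) : Set ℝ :=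
  {x : ℝ | 0 ≤ x ∧ (∃ k : ℤ, x = k * d + x₀ ∨ x = k * d - x₀) ∧
    ∀ u : ℝ, (∀ n : ℕ, μ {(n : ℝ)} ≠ 0 → (n : ℝ) ≤ u) → x ≤ u}

/-- The `j`-fold convolution power of the atom function `m(k) = μ({k})` of a lattice
measure: `m^{(0)} = δ_0` and `m^{(j+1)}(k) = Σ_{i≤k} m^{(j)}(i) m(k-i)`. -/
noncomputable def convPowFun (m : ℕ → ℝ≥0∞) : ℕ → ℕ → ℝ≥0∞
  | 0 => fun k => if k = 0 then 1 else 0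
  | j + 1 => fun k => ∑ i ∈ Finset.range (k + 1), convPowFun m j i * m (k - i)

/-- The atoms `U({k}) = Σ_{n=0}^∞ μ^{(n)}({k})` of the potential measure of the lattice
measure `μ`. -/
noncomputable def potentialFun (μ : MeasureTheory.Measure ℝ) (k : ℕ) : ℝ≥0∞ :=
  ∑' n : ℕ, convPowFun (fun j : ℕ => μ {(j : ℝ)}) n k

/-- The transition kernel of the process of reflections: `q(0,{x}) = μ({x})` and
`q(w,{x}) = Σ_{k ∈ ℕ₀, k < w} U({k}) μ({w + x - k})` for `w > 0`. -/
noncomputable def reflectionKernel (μ : MeasureTheory.Measure ℝ) (w x : ℝ) : ℝ≥0∞ :=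
  if w = 0 then μ {x}
  else ∑' k : ℕ, if (k : ℝ) < w then potentialFun μ k * μ {w + x - (k : ℝ)} else 0

/-- The measure `ρ`: `ρ({0}) = (1 - μ({0}))/2` and
`ρ({x}) = Σ_{k=1}^∞ (μ({x})/2 + μ((x, x+k)) + μ({x+k})/2) μ({k})` for `x > 0`. -/
noncomputable def rhoFun (μ : MeasureTheory.Measure ℝ) (x : ℝ) : ℝ≥0∞ :=
  if x = 0 then (1 - μ {(0 : ℝ)}) / 2
  else ∑' k : ℕ,
    (μ {x} / 2 + μ (Set.Ioo x (x + ((k : ℝ) + 1))) + μ {x + ((k : ℝ) + 1)} / 2) *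
      μ {((k : ℝ) + 1)}

open Finset.HasAntidiagonal in
/-- Convolution against a test function: summing `f` against `m^{(n+1)}` amounts to summing
`f (k + i)` against `m^{(n)}(k) m(i)`. -/
theorem tsum_mul_convPowFun_succ (m : ℕ → ℝ≥0∞) (f : ℕ → ℝ≥0∞) (n : ℕ) :
    ∑' l, f l * convPowFun m (n + 1) l =
      ∑' k, (∑' i, m i * f (k + i)) * convPowFun m n k := by
  have h : ∀ l, f l * convPowFun m (n + 1) l =
      ∑' p : antidiagonal l,
        f (p.1.1 + p.1.2) * (convPowFun m n p.1.1 * m p.1.2) := by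
    intro l
    rw [Finset.tsum_subtype (antidiagonal l)
      (fun p : ℕ × ℕ => f (p.1 + p.2) * (convPowFun m n p.1 * m p.2)),
      show convPowFun m (n + 1) l = _ from (Finset.Nat.sum_antidiagonal_eq_sum_range_succ
        (fun i j => convPowFun m n i * m j) l).symm, Finset.mul_sum]
    refine Finset.sum_congr rfl fun p hp => ?_
    rw [mem_antidiagonal.mp hp]
  simp_rw [h]
  rw [← ENNReal.tsum_sigma' (fun q : Σ l : ℕ, antidiagonal l =>
      f (q.2.1.1 + q.2.1.2) * (convPowFun m n q.2.1.1 * m q.2.1.2)),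
    ← (sigmaAntidiagonalEquivProd (A := ℕ)).symm.tsum_eq, ENNReal.tsum_prod']
  refine tsum_congr fun k => ?_
  rw [← ENNReal.tsum_mul_right]
  refine tsum_congr fun i => ?_
  simp only [sigmaAntidiagonalEquivProd_symm_apply_snd_coe]
  ring

theorem tsum_convPowFun (m : ℕ → ℝ≥0∞) (hm : ∑' k, m k = 1) (n : ℕ) :
    ∑' k, convPowFun m n k = 1 := by
  induction n with
  | zero => simp [convPowFun]
  | succ n ih => simpa [hm, ih] using tsum_mul_convPowFun_succ m (fun _ => 1) n

/-- Chernoff-type bound for convolution powers in terms of the generating function of `m`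
at `1/2`. -/
theorem convPowFun_le (m : ℕ → ℝ≥0∞) (n k : ℕ) :
    convPowFun m n k ≤ 2 ^ k * (∑' i, m i * 2⁻¹ ^ i) ^ n := by
  set G := ∑' i, m i * (2⁻¹ : ℝ≥0∞) ^ i
  have hG : ∀ n, ∑' k, 2⁻¹ ^ k * convPowFun m n k = G ^ n := by
    intro n
    induction n with
    | zero =>
      rw [tsum_eq_single 0] <;> simp +contextual [convPowFun]
    | succ n ih =>
      rw [tsum_mul_convPowFun_succ, pow_succ', ← ih, ← ENNReal.tsum_mul_left]
      refine tsum_congr fun k => ?_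
      rw [← mul_assoc]
      congr 1
      rw [← ENNReal.tsum_mul_right]
      refine tsum_congr fun i => ?_
      ring
  rw [← hG n]
  calc convPowFun m n k = 2 ^ k * (2⁻¹ ^ k * convPowFun m n k) := by
        rw [← mul_assoc, ← mul_pow, ENNReal.mul_inv_cancel (by simp) (by simp), one_pow, one_mul]
    _ ≤ _ := by gcongr; exact ENNReal.le_tsum k

theorem generatingFun_half_lt_one (m : ℕ → ℝ≥0∞) (hm : ∑' k, m k = 1) (h0 : m 0 ≠ 1) :
    ∑' i, m i * (2⁻¹ : ℝ≥0∞) ^ i < 1 := by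
  have hs : m 0 + ∑' i, m (i + 1) = 1 := by
    rw [← hm, tsum_eq_zero_add' (f := m) ENNReal.summable]
  have hne : ∑' i, m (i + 1) ≠ 0 := fun h => h0 (by simpa [h] using hs)
  have hlt : ∑' i, m (i + 1) ≠ ∞ := ne_top_of_le_ne_top ENNReal.one_ne_top
    (hs ▸ le_add_self)
  have h0t : m 0 ≠ ∞ := ne_top_of_le_ne_top ENNReal.one_ne_top (hs ▸ le_self_add)
  rw [tsum_eq_zero_add' ENNReal.summable, pow_zero, mul_one]
  calc m 0 + ∑' i, m (i + 1) * (2⁻¹ : ℝ≥0∞) ^ (i + 1)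
      ≤ m 0 + (∑' i, m (i + 1)) / 2 := by
        rw [div_eq_mul_inv, ← ENNReal.tsum_mul_right]
        gcongr with i
        rw [pow_succ]
        exact mul_le_of_le_one_left' (pow_le_one₀ (by simp) (by simp))
    _ < m 0 + ∑' i, m (i + 1) := ENNReal.add_lt_add_left h0t (ENNReal.half_lt_self hne hlt)
    _ = 1 := hs

/-- The mass of the convolution powers of a non-degenerate law escapes to infinity. -/
theorem tendsto_tsum_mul_convPowFun (m : ℕ → ℝ≥0∞) (hm : ∑' k, m k = 1) (h0 : m 0 ≠ 1)
    (f : ℕ → ℝ≥0∞) (hf1 : ∀ k, f k ≤ 1) (hf : Tendsto f atTop (nhds 0)) :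
    Tendsto (fun n => ∑' k, f k * convPowFun m n k) atTop (nhds 0) := by
  have hc : ∀ k, Tendsto (fun n => convPowFun m n k) atTop (nhds 0) := by
    intro k
    refine tendsto_of_tendsto_of_tendsto_of_le_of_le tendsto_const_nhds ?_
      (fun _ => zero_le) (fun n => convPowFun_le m n k)
    have := ENNReal.Tendsto.const_mul (a := 2 ^ k)
      (ENNReal.tendsto_pow_atTop_nhds_zero_of_lt_one (generatingFun_half_lt_one m hm h0))
      (Or.inr (by simp))
    simpa using this
  rw [ENNReal.tendsto_nhds_zero] at hf ⊢
  intro ε hε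
  have hε2 : 0 < ε / 2 := ENNReal.half_pos hε.ne'
  obtain ⟨K, hK⟩ := eventually_atTop.mp (hf _ hε2)
  have hsum : Tendsto (fun n => ∑ k ∈ Finset.range K, convPowFun m n k) atTop (nhds 0) := by
    simpa using tendsto_finsetSum (Finset.range K) fun k _ => hc k
  filter_upwards [ENNReal.tendsto_nhds_zero.mp hsum _ hε2] with n hn
  rw [← ENNReal.summable.sum_add_tsum_nat_add' (k := K), ← ENNReal.add_halves ε]
  gcongr
  · refine le_trans (Finset.sum_le_sum fun k _ => ?_) hn
    exact mul_le_of_le_one_left' (hf1 k)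
  · calc ∑' k, f (k + K) * convPowFun m n (k + K)
        ≤ ∑' k, ε / 2 * convPowFun m n (k + K) := by
          gcongr with k
          exact hK _ (by omega)
      _ = ε / 2 * ∑' k, convPowFun m n (k + K) := ENNReal.tsum_mul_left
      _ ≤ ε / 2 * 1 := by
          gcongr
          exact (ENNReal.tsum_comp_le_tsum_of_injective (add_left_injective K) _).trans_eq
            (tsum_convPowFun m hm n)
      _ = ε / 2 := mul_one _

/-- If `r = f - P f` for the walk with step law `m` and `f` vanishes at infinity, then `f` is
the potential of `r`. -/
theorem tsum_mul_tsum_convPowFun (m : ℕ → ℝ≥0∞) (hm : ∑' k, m k = 1) (h0 : m 0 ≠ 1)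
    (f r : ℕ → ℝ≥0∞) (hf1 : ∀ k, f k ≤ 1) (hf : Tendsto f atTop (nhds 0))
    (hr : ∀ k, r k + ∑' i, m i * f (k + i) = f k) :
    ∑' k, r k * ∑' n, convPowFun m n k = f 0 := by
  have hpart : ∀ n, ∑ j ∈ Finset.range n, ∑' k, r k * convPowFun m j k
      + ∑' k, f k * convPowFun m n k = f 0 := by
    intro n
    induction n with
    | zero =>
      rw [tsum_eq_single 0] <;> simp +contextual [convPowFun]
    | succ n ih =>
      rw [Finset.sum_range_succ, tsum_mul_convPowFun_succ, add_assoc, ← ENNReal.tsum_add, ← ih]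
      congr 1
      refine tsum_congr fun k => ?_
      rw [← add_mul, hr]
  have hlim := (ENNReal.tendsto_nat_tsum fun j => ∑' k, r k * convPowFun m j k).add
    (tendsto_tsum_mul_convPowFun m hm h0 f hf1 hf)
  simp only [hpart, add_zero] at hlim
  rw [tendsto_nhds_unique tendsto_const_nhds hlim, ENNReal.tsum_comm]
  exact tsum_congr fun k => ENNReal.tsum_mul_left.symm

theorem dvd_of_convPowFun_ne_zero (m : ℕ → ℝ≥0∞) (d : ℕ) (hd : ∀ n, m n ≠ 0 → d ∣ n) (n k : ℕ)
    (h : convPowFun m n k ≠ 0) : d ∣ k := by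
  induction n generalizing k with
  | zero =>
    have : k = 0 := by
      by_contra hk
      simp [convPowFun, hk] at h
    simp [this]
  | succ n ih =>
    obtain ⟨i, hi, hne⟩ := Finset.exists_ne_zero_of_sum_ne_zero h
    have hik : i ≤ k := Nat.lt_succ_iff.mp (Finset.mem_range.mp hi)
    rw [← Nat.add_sub_cancel' hik]
    exact dvd_add (ih i (left_ne_zero_of_mul hne)) (hd _ (right_ne_zero_of_mul hne))
/-- A measure carried by `ℕ₀` is the sum of its atoms. -/
theorem tsum_ite_singleton (μ : Measure ℝ)
    (hlat : μ (Set.range (fun n : ℕ => (n : ℝ)))ᶜ = 0) (A : Set ℝ) [DecidablePred (· ∈ A)] :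
    ∑' z : ℝ, (if z ∈ A then μ {z} else 0) = μ A := by
  set R := Set.range (fun n : ℕ => (n : ℝ))
  have hc : (A ∩ R).Countable := (Set.countable_range _).mono Set.inter_subset_right
  rw [← measure_inter_conull hlat]
  rw [← Set.biUnion_of_singleton (A ∩ R)]
  rw [measure_biUnion hc (Set.pairwiseDisjoint_fiber id _ |>.mono fun _ => by simp)
    (fun _ _ => measurableSet_singleton _), tsum_subtype (A ∩ R) fun z => μ {z}]
  refine tsum_congr fun z => ?_
  by_cases hz : z ∈ A <;> by_cases hzR : z ∈ R <;> simp [Set.indicator, hz, hzR]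
  exact measure_mono_null (by simpa using hzR) hlat

theorem exists_nat_of_singleton_ne_zero (μ : Measure ℝ)
    (hlat : μ (Set.range (fun n : ℕ => (n : ℝ)))ᶜ = 0) (z : ℝ) (hz : μ {z} ≠ 0) :
    ∃ n : ℕ, (n : ℝ) = z := by
  by_contra h
  exact hz (measure_mono_null (by simpa using h) hlat)

theorem tsum_real_eq_tsum_nat (μ : Measure ℝ)
    (hlat : μ (Set.range (fun n : ℕ => (n : ℝ)))ᶜ = 0) (g : ℝ → ℝ≥0∞) :
    ∑' z : ℝ, μ {z} * g z = ∑' n : ℕ, μ {(n : ℝ)} * g n := by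
  refine (Function.Injective.tsum_eq (g := fun n : ℕ => (n : ℝ)) Nat.cast_injective ?_).symm
  intro z hz
  exact exists_nat_of_singleton_ne_zero μ hlat z (left_ne_zero_of_mul hz)

theorem tsum_singleton_natCast (μ : Measure ℝ) [IsProbabilityMeasure μ]
    (hlat : μ (Set.range (fun n : ℕ => (n : ℝ)))ᶜ = 0) : ∑' n : ℕ, μ {(n : ℝ)} = 1 := by
  classical
  have h := tsum_real_eq_tsum_nat μ hlat 1
  have h2 := tsum_ite_singleton μ hlat Set.univ
  simp only [Pi.one_apply, mul_one, Set.mem_univ, if_true, measure_univ] at h h2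
  rw [← h, h2]

theorem singleton_zero_ne_one (μ : Measure ℝ) [IsProbabilityMeasure μ]
    (hnondeg : μ ≠ Measure.dirac 0) : μ {(0 : ℝ)} ≠ 1 := by
  intro h
  apply hnondeg
  have hc : μ {(0 : ℝ)}ᶜ = 0 := (prob_compl_eq_zero_iff (measurableSet_singleton _)).mpr h
  ext A hA
  rw [← measure_inter_conull hc, Measure.dirac_apply' _ hA]
  by_cases h0 : (0 : ℝ) ∈ A
  · rw [Set.inter_eq_right.mpr (by simpa using h0)]
    simp [h0, h]
  · rw [Set.inter_singleton_eq_empty.mpr h0]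
    simp [h0]

/-- The symmetrised tail `ν(w) = μ((w, ∞)) + μ({w})/2`. -/
noncomputable def symmTail (μ : Measure ℝ) (w : ℝ) : ℝ≥0∞ := μ (Set.Ioi w) + μ {w} / 2

theorem symmTail_le (μ : Measure ℝ) (w : ℝ) : symmTail μ w ≤ μ (Set.Ici w) := by
  rw [← Set.Ioi_union_left, measure_union (by simp) (measurableSet_singleton _)]
  unfold symmTail
  gcongr
  exact ENNReal.half_le_self

theorem add_symmTail_eq (μ : Measure ℝ) {a b : ℝ} (h : a < b) :
    μ {a} / 2 + μ (Set.Ioo a b) + μ {b} / 2 + symmTail μ b = symmTail μ a := by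
  unfold symmTail
  rw [← Set.Ioc_union_Ioi_eq_Ioi h.le, measure_union Set.Ioc_disjoint_Ioi_same measurableSet_Ioi,
    ← Set.Ioo_union_right h, measure_union (by simp) (measurableSet_singleton _)]
  nth_rw 3 [← ENNReal.add_halves (μ {b})]
  ring

theorem rhoFun_add_tsum (μ : Measure ℝ) [IsProbabilityMeasure μ]
    (hlat : μ (Set.range (fun n : ℕ => (n : ℝ)))ᶜ = 0) {w : ℝ} (hw : 0 < w) :
    rhoFun μ w + ∑' i : ℕ, μ {(i : ℝ)} * symmTail μ (w + i) = symmTail μ w := by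
  rw [rhoFun, if_neg hw.ne', tsum_eq_zero_add' (f := fun i : ℕ => μ {(i : ℝ)} * _)
    ENNReal.summable, add_left_comm, ← ENNReal.tsum_add]
  have : ∀ k : ℕ, (μ {w} / 2 + μ (Set.Ioo w (w + ((k : ℝ) + 1))) + μ {w + ((k : ℝ) + 1)} / 2) *
      μ {((k : ℝ) + 1)} + μ {((k + 1 : ℕ) : ℝ)} * symmTail μ (w + (k + 1 : ℕ))
      = μ {((k + 1 : ℕ) : ℝ)} * symmTail μ w := by
    intro k
    have hlt : w < w + ((k : ℝ) + 1) := lt_add_of_pos_right w (by positivity)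
    rw [← add_symmTail_eq μ hlt]
    push_cast
    ring
  simp_rw [this]
  have h1 := tsum_singleton_natCast μ hlat
  rw [tsum_eq_zero_add' ENNReal.summable] at h1
  rw [ENNReal.tsum_mul_right]
  simp only [Nat.cast_zero, add_zero] at h1 ⊢
  rw [← add_mul, h1, one_mul]

theorem rhoFun_le (μ : Measure ℝ) [IsProbabilityMeasure μ]
    (hlat : μ (Set.range (fun n : ℕ => (n : ℝ)))ᶜ = 0) {w : ℝ} (hw : 0 < w) :
    rhoFun μ w ≤ μ (Set.Ici w) :=
  le_trans (rhoFun_add_tsum μ hlat hw ▸ le_self_add) (symmTail_le μ w)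

theorem tendsto_symmTail (μ : Measure ℝ) [IsProbabilityMeasure μ] (v : ℝ) :
    Tendsto (fun k : ℕ => symmTail μ (v + k)) atTop (nhds 0) := by
  have h : Tendsto (fun k : ℕ => μ (Set.Ici (v + k))) atTop (nhds 0) := by
    have := tendsto_measure_iInter_atTop (μ := μ) (s := fun k : ℕ => Set.Ici (v + k))
      (fun _ => measurableSet_Ici.nullMeasurableSet)
      (fun i j hij => Set.Ici_subset_Ici.mpr (by gcongr)) ⟨0, measure_ne_top _ _⟩
    have hempty : ⋂ k : ℕ, Set.Ici (v + (k : ℝ)) = ∅ := by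
      refine Set.eq_empty_of_forall_notMem fun z hz => ?_
      obtain ⟨k, hk⟩ := exists_nat_gt (z - v)
      have := Set.mem_Ici.mp (Set.mem_iInter.mp hz k)
      linarith
    rwa [hempty, measure_empty] at this
  exact tendsto_of_tendsto_of_tendsto_of_le_of_le tendsto_const_nhds h
    (fun _ => zero_le) (fun _ => symmTail_le μ _)

/-- `ν` is the potential of `ρ` on `(0, ∞)`. -/
theorem tsum_rhoFun_mul_potentialFun (μ : Measure ℝ) [IsProbabilityMeasure μ]
    (hlat : μ (Set.range (fun n : ℕ => (n : ℝ)))ᶜ = 0) (hnondeg : μ ≠ Measure.dirac 0)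
    {v : ℝ} (hv : 0 < v) :
    ∑' k : ℕ, rhoFun μ (v + k) * potentialFun μ k = symmTail μ v := by
  have h := tsum_mul_tsum_convPowFun (fun j : ℕ => μ {(j : ℝ)}) (tsum_singleton_natCast μ hlat)
    (by simpa using singleton_zero_ne_one μ hnondeg) (fun k => symmTail μ (v + k))
    (fun k => rhoFun μ (v + k)) (fun k => (symmTail_le μ _).trans prob_le_one)
    (tendsto_symmTail μ v) (fun k => by
      have := rhoFun_add_tsum μ hlat (w := v + k) (by positivity)
      simpa [add_assoc] using this)
  simpa [potentialFun] using h

/-- Exchanging the two independent steps in `P(Y > x, Y' > Y - x)`. -/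
theorem tsum_mul_symmTail (μ : Measure ℝ)
    (hlat : μ (Set.range (fun n : ℕ => (n : ℝ)))ᶜ = 0) (x : ℝ) :
    ∑' y : ℝ, (if x < y then μ {y} * symmTail μ (y - x) else 0) =
      ∑' k : ℕ, (μ (Set.Ioo x (x + ((k : ℝ) + 1))) + μ {x + ((k : ℝ) + 1)} / 2) *
        μ {((k : ℝ) + 1)} := by
  classical
  have hν : ∀ y, symmTail μ (y - x) =
      ∑' z : ℝ, μ {z} * ((if y < x + z then 1 else 0) + (if y = x + z then 2⁻¹ else 0)) := by
    intro y
    simp_rw [mul_add]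
    rw [ENNReal.tsum_add, symmTail, ← tsum_ite_singleton μ hlat (Set.Ioi (y - x)),
      tsum_eq_single (f := fun z => μ {z} * if y = x + z then 2⁻¹ else 0) (y - x)
        (fun z hz => by rw [if_neg (fun h => hz (by linarith)), mul_zero])]
    congr 1
    · refine tsum_congr fun z => ?_
      simp [sub_lt_iff_lt_add']
    · simp [div_eq_mul_inv]
  have hcomm : ∑' y : ℝ, (if x < y then μ {y} * symmTail μ (y - x) else 0) =
      ∑' z : ℝ, μ {z} * (μ (Set.Ioo x (x + z)) + if 0 < z then μ {x + z} / 2 else 0) := by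
    calc _ = ∑' y : ℝ, ∑' z : ℝ, μ {z} * ((if y ∈ Set.Ioo x (x + z) then μ {y} else 0) +
            if y = x + z then (if 0 < z then μ {x + z} / 2 else 0) else 0) := by
          refine tsum_congr fun y => ?_
          split_ifs with hxy
          · rw [hν, ← ENNReal.tsum_mul_left]
            refine tsum_congr fun z => ?_
            rw [mul_left_comm]
            congr 1
            by_cases h1 : y < x + z
            · simp [h1, h1.ne, hxy]
            · by_cases h2 : y = x + z
              · subst h2
                have : 0 < z := by linarith
                simp [this, div_eq_mul_inv]
              · simp [h1, h2]
          · symm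
            rw [ENNReal.tsum_eq_zero]
            intro z
            by_cases h2 : y = x + z
            · subst h2
              have : ¬ 0 < z := by linarith
              simp [this]
            · simp [hxy, h2]
      _ = _ := by
          rw [ENNReal.tsum_comm]
          refine tsum_congr fun z => ?_
          rw [ENNReal.tsum_mul_left, ENNReal.tsum_add, tsum_ite_singleton μ hlat, tsum_ite_eq]
  rw [hcomm, tsum_real_eq_tsum_nat μ hlat, tsum_eq_zero_add' ENNReal.summable]
  simp only [Nat.cast_zero, add_zero, Set.Ioo_self, measure_empty, lt_irrefl, if_false, mul_zero,
    zero_add]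
  refine tsum_congr fun k => ?_
  have : (0 : ℝ) < (k : ℝ) + 1 := by positivity
  push_cast
  rw [if_pos this, mul_comm]

theorem tsum_singleton_succ (μ : Measure ℝ) [IsProbabilityMeasure μ]
    (hlat : μ (Set.range (fun n : ℕ => (n : ℝ)))ᶜ = 0) :
    ∑' k : ℕ, μ {((k : ℝ) + 1)} = 1 - μ {(0 : ℝ)} := by
  have h1 := tsum_singleton_natCast μ hlat
  rw [tsum_eq_zero_add' ENNReal.summable] at h1
  push_cast at h1
  exact ENNReal.eq_sub_of_add_eq' ENNReal.one_ne_top (by rw [add_comm]; exact h1)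

theorem measure_Ioi_zero (μ : Measure ℝ) [IsProbabilityMeasure μ]
    (hlat : μ (Set.range (fun n : ℕ => (n : ℝ)))ᶜ = 0) :
    μ (Set.Ioi (0 : ℝ)) = 1 - μ {(0 : ℝ)} := by
  have hneg : μ (Set.Iio (0 : ℝ)) = 0 := by
    refine measure_mono_null ?_ hlat
    rintro z hz ⟨n, rfl⟩
    exact (Set.mem_Iio.mp hz).not_ge (Nat.cast_nonneg n)
  rw [← prob_compl_eq_one_sub (measurableSet_singleton _), ← Set.Iio_union_Ioi]
  refine le_antisymm (measure_mono Set.subset_union_right) ?_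
  simpa [hneg] using measure_union_le (μ := μ) (Set.Iio (0 : ℝ)) (Set.Ioi 0)

theorem tsum_rhoFun_zero (μ : Measure ℝ) [IsProbabilityMeasure μ]
    (hlat : μ (Set.range (fun n : ℕ => (n : ℝ)))ᶜ = 0) :
    ∑' k : ℕ, (μ (Set.Ioo 0 ((k : ℝ) + 1)) + μ {(k : ℝ) + 1} / 2) * μ {((k : ℝ) + 1)} =
      (1 - μ {(0 : ℝ)}) * (1 - μ {(0 : ℝ)}) / 2 := by
  set T := ∑' k : ℕ, (μ (Set.Ioo 0 ((k : ℝ) + 1)) + μ {(k : ℝ) + 1} / 2) * μ {((k : ℝ) + 1)}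
    with hT
  have hT' : T = ∑' k : ℕ, symmTail μ ((k : ℝ) + 1) * μ {((k : ℝ) + 1)} := by
    have h := tsum_mul_symmTail μ hlat 0
    simp only [zero_add, sub_zero] at h
    rw [hT, ← h]
    have hite : ∀ y : ℝ, (if 0 < y then μ {y} * symmTail μ y else 0) =
        μ {y} * if 0 < y then symmTail μ y else 0 := fun y => by rw [mul_ite, mul_zero]
    simp_rw [hite]
    rw [tsum_real_eq_tsum_nat μ hlat, tsum_eq_zero_add' ENNReal.summable]
    simp only [Nat.cast_zero, lt_irrefl, if_false, mul_zero, zero_add]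
    refine tsum_congr fun k => ?_
    have : (0 : ℝ) < (k : ℝ) + 1 := by positivity
    push_cast
    rw [if_pos this, mul_comm]
  have hk : ∀ k : ℕ, μ (Set.Ioo 0 ((k : ℝ) + 1)) + μ {(k : ℝ) + 1} / 2 + symmTail μ ((k : ℝ) + 1)
      = 1 - μ {(0 : ℝ)} := by
    intro k
    have h := add_symmTail_eq μ (show (0 : ℝ) < (k : ℝ) + 1 by positivity)
    rw [symmTail.eq_1 μ 0, measure_Ioi_zero μ hlat, add_comm (1 - μ {(0 : ℝ)}), add_assoc,
      add_assoc] at h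
    rw [add_assoc]
    exact (ENNReal.add_right_inj (ENNReal.div_ne_top (measure_ne_top _ _) (by simp))).mp h
  have h2 : T + T = (1 - μ {(0 : ℝ)}) * (1 - μ {(0 : ℝ)}) := by
    nth_rw 2 [hT']
    rw [hT, ← ENNReal.tsum_add]
    simp_rw [← add_mul, hk]
    rw [ENNReal.tsum_mul_left, tsum_singleton_succ μ hlat]
  rw [← h2, ENNReal.add_div, ENNReal.add_halves]

/-- The two cases in the definition of `ρ` agree with a single formula in which the atom at
`0` is split off. -/
theorem rhoFun_eq (μ : Measure ℝ) [IsProbabilityMeasure μ]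
    (hlat : μ (Set.range (fun n : ℕ => (n : ℝ)))ᶜ = 0) (x : ℝ) :
    rhoFun μ x = rhoFun μ 0 * μ {x} +
      ∑' k : ℕ, (μ (Set.Ioo x (x + ((k : ℝ) + 1))) + μ {x + ((k : ℝ) + 1)} / 2) *
        μ {((k : ℝ) + 1)} := by
  have h0 : rhoFun μ 0 = (1 - μ {(0 : ℝ)}) / 2 := if_pos rfl
  rw [h0]
  by_cases hx : x = 0
  · subst hx
    simp_rw [zero_add]
    rw [h0, tsum_rhoFun_zero μ hlat]
    have : (1 - μ {(0 : ℝ)}) / 2 * μ {0} + (1 - μ {(0 : ℝ)}) * (1 - μ {(0 : ℝ)}) / 2 =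
        (1 - μ {(0 : ℝ)}) / 2 * (μ {0} + (1 - μ {(0 : ℝ)})) := by
      simp only [div_eq_mul_inv]; ring
    rw [this, add_tsub_cancel_of_le prob_le_one, mul_one]
  · rw [rhoFun, if_neg hx, ← tsum_singleton_succ μ hlat, div_eq_mul_inv (∑' k : ℕ, μ {((k : ℝ) + 1)}),
      ← ENNReal.tsum_mul_right, ← ENNReal.tsum_mul_right, ← ENNReal.tsum_add]
    refine tsum_congr fun k => ?_
    simp only [div_eq_mul_inv]; ring

/-- The essential class contains every state that carries `ρ`-mass and leads to one of its
members. -/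
theorem mem_essClass_of_ne_zero (μ : Measure ℝ) [IsProbabilityMeasure μ]
    (hlat : μ (Set.range (fun n : ℕ => (n : ℝ)))ᶜ = 0) (d : ℕ)
    (hd : ∀ n : ℕ, μ {(n : ℝ)} ≠ 0 → d ∣ n) (x₀ x : ℝ) (hx : x ∈ essClass μ d x₀) (w : ℝ)
    (hw : rhoFun μ w * reflectionKernel μ w x ≠ 0) : w ∈ essClass μ d x₀ := by
  classical
  have hreach : ∀ n : ℕ, d ∣ n → ∀ y : ℝ, y = n - x →
      ∃ k : ℤ, y = k * d + x₀ ∨ y = k * d - x₀ := by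
    rintro n ⟨c, rfl⟩ y hy
    obtain ⟨-, ⟨k, hk⟩, -⟩ := hx
    refine ⟨c - k, ?_⟩
    push_cast at hy ⊢
    rcases hk with hk | hk
    · right; rw [hy, hk]; ring
    · left; rw [hy, hk]; ring
  have hρ := left_ne_zero_of_mul hw
  have hq := right_ne_zero_of_mul hw
  rw [reflectionKernel] at hq
  split_ifs at hq with h0
  · subst h0
    obtain ⟨n, rfl⟩ := exists_nat_of_singleton_ne_zero μ hlat x hq
    exact ⟨le_rfl, hreach n (hd n hq) 0 (by ring), fun u hu => (Nat.cast_nonneg n).trans (hu n hq)⟩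
  · obtain ⟨k, hk⟩ : ∃ k : ℕ, (if (k : ℝ) < w then potentialFun μ k * μ {w + x - (k : ℝ)}
        else 0) ≠ 0 := by
      by_contra! h
      exact hq (ENNReal.tsum_eq_zero.mpr h)
    have hkw : (k : ℝ) < w := by
      by_contra h
      exact hk (if_neg h)
    rw [if_pos hkw] at hk
    have hw0 : 0 < w := (Nat.cast_nonneg k).trans_lt hkw
    obtain ⟨n, hn⟩ := exists_nat_of_singleton_ne_zero μ hlat _ (right_ne_zero_of_mul hk)
    have hdn : d ∣ n := hd n (hn ▸ right_ne_zero_of_mul hk)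
    obtain ⟨j, hj⟩ : ∃ j, convPowFun (fun j : ℕ => μ {(j : ℝ)}) j k ≠ 0 := by
      by_contra! h
      exact left_ne_zero_of_mul hk (ENNReal.tsum_eq_zero.mpr h)
    have hdk : d ∣ k := dvd_of_convPowFun_ne_zero _ d hd j k hj
    refine ⟨hw0.le, hreach (n + k) (dvd_add hdn hdk) w (by push_cast; rw [hn]; ring), ?_⟩
    intro u hu
    by_contra! huw
    refine hρ (le_antisymm ((rhoFun_le μ hlat hw0).trans ?_) zero_le)
    rw [← tsum_ite_singleton μ hlat]
    refine (ENNReal.tsum_eq_zero.mpr fun z => ?_).le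
    by_contra hz
    have hzw : w ≤ z := by
      by_contra h
      exact hz (if_neg h)
    rw [if_pos (Set.mem_Ici.mpr hzw)] at hz
    obtain ⟨n, rfl⟩ := exists_nat_of_singleton_ne_zero μ hlat z hz
    linarith [hu n hz]

/-- In the lattice case, for every starting point `x₀ ≥ 0` and every
`x ∈ C(x₀)`, the measure `ρ` satisfies `Σ_{w ∈ C(x₀)} ρ({w}) q(w,{x}) = ρ({x})`:
the restriction of `ρ` to the essential class `C(x₀)` is an invariant measure for the
process of reflections on `C(x₀)`. -/
theorem rho_invariant_for_reflections
    (μ : Measure ℝ) [IsProbabilityMeasure μ]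
    (hlat : μ (Set.range (fun n : ℕ => (n : ℝ)))ᶜ = 0)
    (hnondeg : μ ≠ Measure.dirac 0)
    (d : ℕ)
    (hd1 : ∀ n : ℕ, μ {(n : ℝ)} ≠ 0 → d ∣ n)
    (hd2 : ∀ e : ℕ, (∀ n : ℕ, μ {(n : ℝ)} ≠ 0 → e ∣ n) → e ∣ d)
    (x₀ : ℝ) (hx₀ : 0 ≤ x₀) (x : ℝ) (hx : x ∈ essClass μ d x₀) :
    ∑' w : essClass μ d x₀, rhoFun μ w * reflectionKernel μ w x = rhoFun μ x := by
  classical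
  rw [tsum_subtype_eq_of_support_subset (f := fun w => rhoFun μ w * reflectionKernel μ w x)
    (fun w hw => mem_essClass_of_ne_zero μ hlat d hd1 x₀ x hx w hw)]
  have hsplit : ∀ w : ℝ, rhoFun μ w * reflectionKernel μ w x =
      (if w = 0 then rhoFun μ 0 * μ {x} else 0) +
        ∑' k : ℕ, if (k : ℝ) < w then rhoFun μ w * potentialFun μ k * μ {w + x - (k : ℝ)}
          else 0 := by
    intro w
    rw [reflectionKernel]
    split_ifs with h
    · subst h
      simp [not_lt.mpr (Nat.cast_nonneg (α := ℝ) _)]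
    · rw [zero_add, ← ENNReal.tsum_mul_left]
      refine tsum_congr fun k => ?_
      rw [mul_ite, mul_zero, mul_assoc]
  simp_rw [hsplit]
  rw [ENNReal.tsum_add, tsum_ite_eq, rhoFun_eq μ hlat x, ← tsum_mul_symmTail μ hlat x]
  congr 1
  calc _ = ∑' (k : ℕ) (v : ℝ), (if 0 < v then rhoFun μ (v + k) * potentialFun μ k * μ {v + x}
          else 0) := by
        rw [ENNReal.tsum_comm]
        refine tsum_congr fun k => ?_
        rw [← (Equiv.addRight (k : ℝ)).tsum_eq]
        refine tsum_congr fun v => ?_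
        simp [add_right_comm]
    _ = ∑' v : ℝ, (if 0 < v then μ {v + x} * symmTail μ v else 0) := by
        rw [ENNReal.tsum_comm]
        refine tsum_congr fun v => ?_
        split_ifs with hv
        · rw [ENNReal.tsum_mul_right, tsum_rhoFun_mul_potentialFun μ hlat hnondeg hv, mul_comm]
        · simp
    _ = _ := by
        rw [← (Equiv.addRight x).tsum_eq fun y => if x < y then μ {y} * symmTail μ (y - x) else 0]
        refine tsum_congr fun v => ?_
        simp
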